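/- arXiv:1909.02929 — 2 statements merged into one kernel-verified Lean document; each statement's English description precedes it below -/
import Mathlib

section
/- For every z > 0 and c ≥ 0, the trigamma function satisfies 0 ≤ ψ₁(z) − ψ₁(z+c) ≤ (c+1)/z². -/
noncomputable def digamma (x : ℝ) : ℝ := deriv (fun t => Real.log (Real.Gamma t)) x

noncomputable def trigamma (x : ℝ) : ℝ := deriv digamma x

open Filter Topology Set

theorem differentiableAt_log_Gamma {x : ℝ} (hx : 0 < x) :
    DifferentiableAt ℝ (fun t => Real.log (Real.Gamma t)) x :=
  (Real.differentiableOn_Gamma_Ioi.differentiableAt (Ioi_mem_nhds hx)).log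
    (Real.Gamma_pos_of_pos hx).ne'

theorem digamma_monotoneOn : MonotoneOn digamma (Ioi 0) :=
  Real.convexOn_log_Gamma.monotoneOn_deriv fun _ hx => differentiableAt_log_Gamma hx

theorem digamma_add_one {x : ℝ} (hx : 0 < x) : digamma (x + 1) = digamma x + 1 / x := by
  have h : (fun t => Real.log (Real.Gamma (t + 1))) =ᶠ[𝓝 x]
      fun t => Real.log (Real.Gamma t) + Real.log t := by
    filter_upwards [Ioi_mem_nhds hx] with t ht
    have ht : 0 < t := ht
    rw [Real.Gamma_add_one ht.ne', Real.log_mul ht.ne' (Real.Gamma_pos_of_pos ht).ne', add_comm]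
  have h' := h.deriv_eq
  rw [deriv_comp_add_const (f := fun t => Real.log (Real.Gamma t)),
    deriv_fun_add (differentiableAt_log_Gamma hx) (Real.differentiableAt_log hx.ne'),
    Real.deriv_log, ← one_div] at h'
  exact h'

theorem digamma_add_nat {x : ℝ} (hx : 0 < x) (N : ℕ) :
    digamma (x + N) = digamma x + ∑ n ∈ Finset.range N, 1 / (x + n) := by
  induction N with
  | zero => simp
  | succ k ih =>
    rw [Finset.sum_range_succ, ← add_assoc, ← ih, ← digamma_add_one (by positivity)]
    push_cast
    rw [add_assoc]

theorem digamma_sub_le {x y : ℝ} (hx : 0 < x) (hy : 0 < y) {k : ℕ} (hk : y ≤ x + k) :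
    digamma y - digamma x ≤ k / x := by
  have h₁ : digamma y ≤ digamma (x + k) :=
    digamma_monotoneOn hy (show 0 < x + k by positivity) hk
  have h₂ : ∑ n ∈ Finset.range k, 1 / (x + n) ≤ ∑ _n ∈ Finset.range k, 1 / x :=
    Finset.sum_le_sum fun n _ => one_div_le_one_div_of_le hx (by simp)
  rw [Finset.sum_const, Finset.card_range, nsmul_eq_mul, mul_one_div] at h₂
  rw [digamma_add_nat hx] at h₁
  linarith

theorem tendsto_digamma_add_nat_sub {x y : ℝ} (hx : 0 < x) (hy : 0 < y) :
    Tendsto (fun N : ℕ => digamma (y + N) - digamma (x + N)) atTop (𝓝 0) := by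
  obtain ⟨k, hk⟩ := exists_nat_ge (y - x)
  obtain ⟨l, hl⟩ := exists_nat_ge (x - y)
  have hlim (m : ℕ) (w : ℝ) : Tendsto (fun N : ℕ => (m : ℝ) / (w + N)) atTop (𝓝 0) :=
    tendsto_const_nhds.div_atTop (tendsto_atTop_add_const_left _ _ tendsto_natCast_atTop_atTop)
  have hneg := (hlim l y).neg
  rw [neg_zero] at hneg
  refine tendsto_of_tendsto_of_tendsto_of_le_of_le hneg (hlim k x)
    (fun N => ?_) fun N => ?_
  · have := digamma_sub_le (x := y + N) (y := x + N) (k := l) (by positivity) (by positivity)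
      (by linarith)
    dsimp only
    linarith
  · exact digamma_sub_le (by positivity) (by positivity) (by linarith)

theorem summable_one_div_add_nat_sq {x : ℝ} (hx : 0 < x) :
    Summable fun n : ℕ => 1 / (x + n) ^ 2 := by
  rw [← summable_nat_add_iff 1]
  refine Summable.of_nonneg_of_le (fun n => by positivity) (fun n => ?_)
    ((summable_nat_add_iff 1).2 (Real.summable_one_div_nat_pow.2 one_lt_two))
  gcongr
  linarith

theorem hasSum_trigamma {x : ℝ} (hx : 0 < x) :
    HasSum (fun n : ℕ => 1 / (x + n) ^ 2) (trigamma x) := by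
  set f : ℕ → ℝ → ℝ := fun n y => 1 / (x + n) - 1 / (y + n) with hf
  have hpos {y : ℝ} (hy : y ∈ Ioi (x / 2)) : 0 < y := (half_pos hx).trans hy
  have hderiv (n : ℕ) (y : ℝ) (hy : y ∈ Ioi (x / 2)) :
      HasDerivAt (f n) (1 / (y + n) ^ 2) y := by
    have := hpos hy
    have h := (((hasDerivAt_id y).add_const (n : ℝ)).fun_inv
      (by simp only [id]; positivity)).const_sub (1 / (x + n))
    simpa [hf, neg_div] using h
  have hbound (n : ℕ) (y : ℝ) (hy : y ∈ Ioi (x / 2)) :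
      ‖1 / (y + n) ^ 2‖ ≤ 1 / (x / 2 + n) ^ 2 := by
    have := hpos hy
    have hy' : x / 2 < y := hy
    rw [Real.norm_of_nonneg (by positivity)]
    gcongr
  have hu := summable_one_div_add_nat_sq (half_pos hx)
  have hx' : x ∈ Ioi (x / 2) := half_lt_self hx
  have h0 : Summable fun n => f n x := by simp [hf, summable_zero]
  have htsum {y : ℝ} (hy : y ∈ Ioi (x / 2)) : digamma y = digamma x + ∑' n, f n y := by
    have hs := (summable_of_summable_hasDerivAt_of_isPreconnected hu isOpen_Ioi
      isPreconnected_Ioi hderiv hbound hx' h0 hy).hasSum.tendsto_sum_nat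
    have hd := (tendsto_digamma_add_nat_sub hx (hpos hy)).const_sub (digamma y - digamma x)
    have := tendsto_nhds_unique hs (hd.congr fun N => by
      rw [digamma_add_nat hx, digamma_add_nat (hpos hy), Finset.sum_sub_distrib]
      ring)
    linarith
  have hD := (hasDerivAt_tsum_of_isPreconnected hu isOpen_Ioi isPreconnected_Ioi hderiv hbound
    hx' h0 hx').const_add (digamma x)
  have hD' := hD.congr_of_eventuallyEq (f₁ := digamma)
    (by filter_upwards [Ioi_mem_nhds hx'] with y hy using htsum hy)
  rw [trigamma, hD'.deriv]
  exact (summable_one_div_add_nat_sq hx).hasSum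

theorem one_div_sq_sub_le {a c : ℝ} (ha : 0 < a) (hc : 0 ≤ c) :
    1 / (a + 1) ^ 2 - 1 / (a + 1 + c) ^ 2 ≤ c * (1 / a ^ 2 - 1 / (a + 1) ^ 2) := by
  have h₁ : 1 / (a + 1) ^ 2 - 1 / (a + 1 + c) ^ 2 ≤ c * (2 / (a + 1) ^ 3) := by
    rw [div_sub_div _ _ (by positivity) (by positivity), mul_div_assoc',
      div_le_div_iff₀ (by positivity) (by positivity)]
    have : 0 ≤ (a + 1) ^ 2 * c ^ 2 * (3 * (a + 1) + 2 * c) := by positivity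
    linear_combination this
  have h₂ : 2 / (a + 1) ^ 3 ≤ 1 / a ^ 2 - 1 / (a + 1) ^ 2 := by
    rw [div_sub_div _ _ (by positivity) (by positivity),
      div_le_div_iff₀ (by positivity) (by positivity)]
    have : 0 ≤ (a + 1) ^ 2 * (3 * a + 1) := by positivity
    linear_combination this
  exact h₁.trans (mul_le_mul_of_nonneg_left h₂ hc)

theorem sum_one_div_sq_sub_le {z c : ℝ} (hz : 0 < z) (hc : 0 ≤ c) (N : ℕ) :
    ∑ n ∈ Finset.range (N + 1), (1 / (z + n) ^ 2 - 1 / (z + c + n) ^ 2) ≤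
      (c + 1) / z ^ 2 - c / (z + N) ^ 2 := by
  induction N with
  | zero =>
    have : 0 ≤ 1 / (z + c) ^ 2 := by positivity
    simp only [zero_add, Finset.sum_range_one, Nat.cast_zero, add_zero, add_div]
    linarith
  | succ k ih =>
    rw [Finset.sum_range_succ]
    have h := one_div_sq_sub_le (a := z + k) (by positivity) hc
    rw [mul_sub, mul_one_div, mul_one_div] at h
    push_cast
    rw [← add_assoc z, show z + c + (k + 1 : ℝ) = z + k + 1 + c by ring]
    linarith

theorem trigamma_diff_bounds (z c : ℝ) (hz : 0 < z) (hc : 0 ≤ c) :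
    0 ≤ trigamma z - trigamma (z + c) ∧ trigamma z - trigamma (z + c) ≤ (c + 1) / z ^ 2 := by
  have h := (hasSum_trigamma hz).sub (hasSum_trigamma (add_pos_of_pos_of_nonneg hz hc))
  refine ⟨h.nonneg fun n => sub_nonneg.2 ?_, ?_⟩
  · gcongr
    linarith
  · refine le_of_tendsto' ((tendsto_add_atTop_iff_nat 1).2 h.tendsto_sum_nat) fun N => ?_
    have : 0 ≤ c / (z + N) ^ 2 := by positivity
    linarith [sum_one_div_sq_sub_le hz hc N]
end

section
/- For every λ > 0, r > 0, α > 1 and y ∈ ℕ, with γ = (α−1)/r, the derivative of the log beta negative binomial pmf with respect to log λ equals the score: λ · (d/dλ) log p(y; λ, r, α) = γλ·(ψ(γλ+y) + ψ(γλ+α) − ψ(γλ+y+α+r) − ψ(γλ)). -/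
noncomputable def betaFn (a b : ℝ) : ℝ := Real.Gamma a * Real.Gamma b / Real.Gamma (a + b)

noncomputable def bnbPmf (lam r a : ℝ) (y : ℕ) : ℝ :=
  Real.Gamma ((y : ℝ) + r) / (Real.Gamma ((y : ℝ) + 1) * Real.Gamma r) *
    (betaFn (a + r) ((a - 1) * lam / r + (y : ℝ)) / betaFn a ((a - 1) * lam / r))

theorem hasDerivAt_log_Gamma {x : ℝ} (hx : 0 < x) :
    HasDerivAt (fun t => Real.log (Real.Gamma t)) (digamma x) x :=
  ((Real.differentiableOn_Gamma_Ioi.differentiableAt (Ioi_mem_nhds hx)).log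
    (Real.Gamma_pos_of_pos hx).ne').hasDerivAt

theorem hasDerivAt_log_Gamma_mul_add {c b l : ℝ} (h : 0 < c * l + b) :
    HasDerivAt (fun t => Real.log (Real.Gamma (c * t + b))) (digamma (c * l + b) * c) l := by
  have hlin : HasDerivAt (fun t : ℝ => c * t + b) c l := by
    simpa using ((hasDerivAt_id l).const_mul c).add_const b
  exact (hasDerivAt_log_Gamma h).comp l hlin

theorem log_betaFn {a b : ℝ} (ha : 0 < a) (hb : 0 < b) :
    Real.log (betaFn a b) =
      Real.log (Real.Gamma a) + Real.log (Real.Gamma b) - Real.log (Real.Gamma (a + b)) := by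
  have hΓa := (Real.Gamma_pos_of_pos ha).ne'
  have hΓb := (Real.Gamma_pos_of_pos hb).ne'
  rw [betaFn, Real.log_div (mul_ne_zero hΓa hΓb) (Real.Gamma_pos_of_pos (add_pos ha hb)).ne',
    Real.log_mul hΓa hΓb]

theorem betaFn_pos {a b : ℝ} (ha : 0 < a) (hb : 0 < b) : 0 < betaFn a b :=
  div_pos (mul_pos (Real.Gamma_pos_of_pos ha) (Real.Gamma_pos_of_pos hb))
    (Real.Gamma_pos_of_pos (add_pos ha hb))

theorem log_bnbPmf {l r a : ℝ} (hl : 0 < l) (hr : 0 < r) (ha : 1 < a) (y : ℕ) :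
    Real.log (bnbPmf l r a y) =
      Real.log (Real.Gamma ((y : ℝ) + r) / (Real.Gamma ((y : ℝ) + 1) * Real.Gamma r)) +
          Real.log (Real.Gamma (a + r)) - Real.log (Real.Gamma a) +
        (Real.log (Real.Gamma ((a - 1) / r * l + y)) +
            Real.log (Real.Gamma ((a - 1) / r * l + a)) -
          Real.log (Real.Gamma ((a - 1) / r * l + (y + a + r))) -
          Real.log (Real.Gamma ((a - 1) / r * l + 0))) := by
  have hg : 0 < (a - 1) / r * l := mul_pos (div_pos (sub_pos.2 ha) hr) hl
  have ha0 : 0 < a := by linarith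
  have har : 0 < a + r := by linarith
  have hgy : 0 < (a - 1) / r * l + y := by positivity
  have hcoef : Real.Gamma ((y : ℝ) + r) / (Real.Gamma ((y : ℝ) + 1) * Real.Gamma r) ≠ 0 := by
    have h1 := Real.Gamma_pos_of_pos (s := (y : ℝ) + r) (by positivity)
    have h2 := Real.Gamma_pos_of_pos (s := (y : ℝ) + 1) (by positivity)
    have h3 := Real.Gamma_pos_of_pos hr
    positivity
  have hB := betaFn_pos har hgy
  have hB' := betaFn_pos ha0 hg
  rw [bnbPmf, mul_div_right_comm, Real.log_mul hcoef (div_pos hB hB').ne',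
    Real.log_div hB.ne' hB'.ne', log_betaFn har hgy, log_betaFn ha0 hg,
    show a + r + ((a - 1) / r * l + y) = (a - 1) / r * l + (y + a + r) by ring,
    add_comm a ((a - 1) / r * l), add_zero]
  ring

theorem bnb_log_deriv_eq_score (lam r a : ℝ) (hlam : 0 < lam) (hr : 0 < r) (ha : 1 < a)
    (y : ℕ) :
    lam * deriv (fun l => Real.log (bnbPmf l r a y)) lam =
      ((a - 1) / r) * lam *
        (digamma (((a - 1) / r) * lam + (y : ℝ)) + digamma (((a - 1) / r) * lam + a) -
          digamma (((a - 1) / r) * lam + (y : ℝ) + a + r) - digamma (((a - 1) / r) * lam)) := by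
  have hg : 0 < (a - 1) / r * lam := mul_pos (div_pos (sub_pos.2 ha) hr) hlam
  have ha0 : 0 < a := by linarith
  have hlog : (fun l => Real.log (bnbPmf l r a y)) =ᶠ[nhds lam] _ :=
    Filter.eventually_of_mem (Ioi_mem_nhds hlam) fun l hl => log_bnbPmf hl hr ha y
  have hderiv := ((((hasDerivAt_log_Gamma_mul_add (c := (a - 1) / r) (b := y) (l := lam)
    (by positivity)).add
    (hasDerivAt_log_Gamma_mul_add (c := (a - 1) / r) (b := a) (by positivity))).sub
    (hasDerivAt_log_Gamma_mul_add (c := (a - 1) / r) (b := y + a + r) (by positivity))).sub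
    (hasDerivAt_log_Gamma_mul_add (c := (a - 1) / r) (b := 0) (by positivity))).const_add
      (Real.log (Real.Gamma ((y : ℝ) + r) / (Real.Gamma ((y : ℝ) + 1) * Real.Gamma r)) +
        Real.log (Real.Gamma (a + r)) - Real.log (Real.Gamma a))
  rw [(hderiv.congr_of_eventuallyEq hlog).deriv, add_zero, ← add_assoc, ← add_assoc]
  ring
end
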